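/- Let G = ([n],H) be a finite q-uniform hypergraph (q ≥ 2) with non-backtracking matrix B, edge reversal matrix P (which is invertible, since P² = (q−2)P + (q−1)I), adjacency matrix A and degree matrix D. Let v be an eigenvector of B with eigenvalue λ ∉ {1, −(q−1)}. Define v_in, v_out ∈ ℂ^n by v_in(i) = Σ_{e ∈ H, i ∈ e} [P^{−1}v](i→e) and v_out(i) = Σ_{e ∈ H, i ∈ e} v(i→e). Then the vector v′ = (v_in, v_out) ∈ ℂ^{2n} is nonzero and is an eigenvector of the 2n × 2n matrix B̃ = [[0, D − I],[−(q−1)I, A − (q−2)I]] with the same eigenvalue λ. -/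

import Mathlib

open scoped BigOperators Matrix

namespace HypergraphNB

variable {n : ℕ}

/-- The type of oriented hyperedges `v → e` of a hypergraph with hyperedge set `H`. -/
def OEdge (H : Finset (Finset (Fin n))) : Type _ :=
  {a : Fin n × Finset (Fin n) // a.2 ∈ H ∧ a.1 ∈ a.2}

noncomputable instance (H : Finset (Finset (Fin n))) : Fintype (OEdge H) := by
  unfold OEdge; infer_instance

instance (H : Finset (Finset (Fin n))) : DecidableEq (OEdge H) := by
  unfold OEdge; exact Subtype.instDecidableEq

/-- The non-backtracking matrix `B` (over `ℂ`). -/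
def nbMatrix (H : Finset (Finset (Fin n))) : Matrix (OEdge H) (OEdge H) ℂ :=
  fun a b => if b.1.1 ∈ a.1.2 ∧ b.1.1 ≠ a.1.1 ∧ b.1.2 ≠ a.1.2 then 1 else 0

/-- The edge reversal matrix `P` (over `ℂ`). -/
def revMatrix (H : Finset (Finset (Fin n))) : Matrix (OEdge H) (OEdge H) ℂ :=
  fun a b => if a.1.2 = b.1.2 ∧ a.1.1 ≠ b.1.1 then 1 else 0

/-- The adjacency matrix `A` (over `ℂ`). -/
def adjMatrix (H : Finset (Finset (Fin n))) : Matrix (Fin n) (Fin n) ℂ :=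
  fun i j => if i ≠ j then ((H.filter (fun e => i ∈ e ∧ j ∈ e)).card : ℂ) else 0

/-- The diagonal degree matrix `D` (over `ℂ`). -/
def degMatrix (H : Finset (Finset (Fin n))) : Matrix (Fin n) (Fin n) ℂ :=
  Matrix.diagonal (fun i => ((H.filter (fun e => i ∈ e)).card : ℂ))

/-- The reduced `2n × 2n` matrix `B̃ = [[0, D − I], [−(q−1)I, A − (q−2)I]]`. -/
def redMatrix (q : ℕ) (H : Finset (Finset (Fin n))) :
    Matrix (Fin n ⊕ Fin n) (Fin n ⊕ Fin n) ℂ :=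
  Matrix.fromBlocks 0 (degMatrix H - 1)
    (-(((q : ℂ) - 1) • (1 : Matrix (Fin n) (Fin n) ℂ)))
    (adjMatrix H - ((q : ℂ) - 2) • (1 : Matrix (Fin n) (Fin n) ℂ))

/-- `v_in(i) = Σ_{e ∈ H, i ∈ e} [P⁻¹ v](i→e)`. -/
noncomputable def vIn (H : Finset (Finset (Fin n))) (v : OEdge H → ℂ) : Fin n → ℂ :=
  fun i => ∑ a : OEdge H, if a.1.1 = i then ((revMatrix H)⁻¹).mulVec v a else 0

/-- `v_out(i) = Σ_{e ∈ H, i ∈ e} v(i→e)`. -/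
noncomputable def vOut (H : Finset (Finset (Fin n))) (v : OEdge H → ℂ) : Fin n → ℂ :=
  fun i => ∑ a : OEdge H, if a.1.1 = i then v a else 0

/-!
The reduction `v ↦ (v_in, v_out)` is linear, given by a matrix `R`, and it intertwines the two
matrices for *every* vector: `B̃ R = R B`. Indeed, let `T` and `E` record the vertex and the
hyperedge of an oriented hyperedge. Then `P = E Eᵀ - 1` and `B = P (T Tᵀ - 1)`, while `Tᵀ T = D` and
`Tᵀ P T = A`, so the two rows `Tᵀ P⁻¹` and `Tᵀ` of `R` can be pushed through `B` using
`P = (q - 2) + (q - 1) P⁻¹`.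

Hence `R` sends eigenvectors of `B` to eigenvectors of `B̃` unless it kills them. If `v_out = Tᵀ v`
vanishes then `B v = -P v`, and since `(P + 1)² = q (P + 1)`, the only possible eigenvalues of `-P`
are `1` and `-(q - 1)`.
-/

section Incidence

variable (H : Finset (Finset (Fin n)))

theorem sum_oedge {M : Type*} [AddCommMonoid M] (f : Fin n → Finset (Fin n) → M) :
    ∑ a : OEdge H, f a.1.1 a.1.2 = ∑ e ∈ H, ∑ i ∈ e, f i e := by
  calc ∑ a : OEdge H, f a.1.1 a.1.2
      = ∑ p : Fin n × Finset (Fin n) with p.2 ∈ H ∧ p.1 ∈ p.2, f p.1 p.2 :=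
        (Finset.sum_subtype _ (by simp) fun p : Fin n × Finset (Fin n) => f p.1 p.2).symm
    _ = ∑ e ∈ H, ∑ i ∈ e, f i e :=
        Finset.sum_finset_product_right' _ H (fun e => e) (by simp)

/-- The incidence matrix `T` between oriented hyperedges `v → e` and their vertices `v`, which
turns `v_out` into `Tᵀ v` and `v_in` into `Tᵀ P⁻¹ v`. -/
def tailMatrix : Matrix (OEdge H) (Fin n) ℂ :=
  Matrix.of fun a i => if a.1.1 = i then 1 else 0

/-- The incidence matrix `E` between oriented hyperedges `v → e` and their hyperedges `e`. Its
columns are indexed by the members of `H` only, so that `Eᵀ E = q` for a `q`-uniform hypergraph. -/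
def edgeMatrix : Matrix (OEdge H) H ℂ :=
  Matrix.of fun a e => if a.1.2 = e then 1 else 0

/-- The vertex-hyperedge incidence matrix `N` of the hypergraph, through which `A` and `D` are
related to `T` and `E`. -/
def incMatrix : Matrix (Fin n) H ℂ :=
  Matrix.of fun i e => if i ∈ e.1 then 1 else 0

theorem tailMatrix_transpose_mul_self : (tailMatrix H)ᵀ * tailMatrix H = degMatrix H := by
  ext i j
  have hsum := sum_oedge H fun k _ => (if k = i then 1 else 0) * (if k = j then (1 : ℂ) else 0)
  simp only [Matrix.mul_apply, Matrix.transpose_apply, tailMatrix, Matrix.of_apply, hsum]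
  obtain rfl | hij := eq_or_ne i j
  · simp [degMatrix]
  · simp [degMatrix, hij, hij.symm]

theorem edgeMatrix_transpose_mul_self :
    (edgeMatrix H)ᵀ * edgeMatrix H = Matrix.diagonal fun e : H => (e.1.card : ℂ) := by
  ext e f
  have hsum := sum_oedge H fun _ g => (if g = e.1 then 1 else 0) * (if g = f.1 then (1 : ℂ) else 0)
  simp only [Matrix.mul_apply, Matrix.transpose_apply, edgeMatrix, Matrix.of_apply, hsum]
  obtain rfl | hef := eq_or_ne e f
  · simp
  · simp [hef, Subtype.coe_ne_coe.2 hef.symm]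

theorem tailMatrix_transpose_mul_edgeMatrix :
    (tailMatrix H)ᵀ * edgeMatrix H = incMatrix H := by
  ext i e
  have hsum := sum_oedge H fun k g => (if k = i then 1 else 0) * (if g = e.1 then (1 : ℂ) else 0)
  simp only [Matrix.mul_apply, Matrix.transpose_apply, tailMatrix, edgeMatrix, Matrix.of_apply,
    hsum]
  simp [incMatrix]

theorem edgeMatrix_mul_apply {κ : Type*} (M : Matrix H κ ℂ) (a : OEdge H) (k : κ) :
    (edgeMatrix H * M) a k = M ⟨a.1.2, a.2.1⟩ k := by
  have hedge (e : H) : a.1.2 = e ↔ ⟨a.1.2, a.2.1⟩ = e :=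
    (Subtype.ext_iff (a1 := ⟨a.1.2, a.2.1⟩)).symm
  simp [Matrix.mul_apply, edgeMatrix, hedge]

theorem mul_tailMatrix_transpose_apply {κ : Type*} (M : Matrix κ (Fin n) ℂ) (k : κ)
    (a : OEdge H) : (M * (tailMatrix H)ᵀ) k a = M k a.1.1 := by
  simp [Matrix.mul_apply, tailMatrix]

theorem edgeMatrix_mul_transpose : edgeMatrix H * (edgeMatrix H)ᵀ = revMatrix H + 1 := by
  ext a b
  have heq : a = b ↔ a.1.1 = b.1.1 ∧ a.1.2 = b.1.2 := Subtype.ext_iff.trans Prod.ext_iff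
  have hsum : (edgeMatrix H * (edgeMatrix H)ᵀ) a b = if a.1.2 = b.1.2 then 1 else 0 := by
    rw [edgeMatrix_mul_apply]
    simp [edgeMatrix, eq_comm]
  rw [hsum, Matrix.add_apply, Matrix.one_apply, revMatrix]
  by_cases hvertex : a.1.1 = b.1.1 <;> by_cases hedge : a.1.2 = b.1.2 <;>
    simp [heq, hvertex, hedge]

theorem incMatrix_mul_transpose :
    incMatrix H * (incMatrix H)ᵀ = adjMatrix H + degMatrix H := by
  ext i j
  have hsum : (incMatrix H * (incMatrix H)ᵀ) i j =
      ((H.filter fun e => i ∈ e ∧ j ∈ e).card : ℂ) := by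
    have hcoe := Finset.sum_coe_sort H fun e => if i ∈ e ∧ j ∈ e then (1 : ℂ) else 0
    simpa [Matrix.mul_apply, incMatrix, ← ite_and, and_comm] using hcoe
  rw [hsum, Matrix.add_apply, adjMatrix, degMatrix]
  obtain rfl | hij := eq_or_ne i j
  · simp
  · simp [hij]

theorem revMatrix_mul_tailMatrix :
    revMatrix H * tailMatrix H = edgeMatrix H * (incMatrix H)ᵀ - tailMatrix H := by
  rw [← tailMatrix_transpose_mul_edgeMatrix, Matrix.transpose_mul, Matrix.transpose_transpose,
    ← Matrix.mul_assoc, edgeMatrix_mul_transpose, Matrix.add_mul, Matrix.one_mul,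
    add_sub_cancel_right]

theorem tailMatrix_transpose_mul_revMatrix_mul_tailMatrix :
    (tailMatrix H)ᵀ * (revMatrix H * tailMatrix H) = adjMatrix H := by
  rw [revMatrix_mul_tailMatrix, Matrix.mul_sub, ← Matrix.mul_assoc,
    tailMatrix_transpose_mul_edgeMatrix, incMatrix_mul_transpose, tailMatrix_transpose_mul_self,
    add_sub_cancel_right]

theorem nbMatrix_eq_revMatrix_mul :
    nbMatrix H = revMatrix H * (tailMatrix H * (tailMatrix H)ᵀ - 1) := by
  rw [Matrix.mul_sub, Matrix.mul_one, ← Matrix.mul_assoc, revMatrix_mul_tailMatrix]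
  ext a b
  rw [Matrix.sub_apply, mul_tailMatrix_transpose_apply, Matrix.sub_apply, edgeMatrix_mul_apply]
  simp only [nbMatrix, revMatrix, incMatrix, tailMatrix, Matrix.transpose_apply, Matrix.of_apply]
  by_cases hmem : b.1.1 ∈ a.1.2
  · simp only [hmem, true_and, if_true]
    by_cases hvertex : a.1.1 = b.1.1 <;> by_cases hedge : a.1.2 = b.1.2 <;>
      simp [hvertex, hedge, eq_comm (a := b.1.1), eq_comm (a := b.1.2)]
  · have hvertex : a.1.1 ≠ b.1.1 := fun h => hmem (h ▸ a.2.2)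
    have hedge : a.1.2 ≠ b.1.2 := fun h => hmem (h ▸ b.2.2)
    simp [hmem, hvertex, hedge]

theorem tailMatrix_transpose_mul_nbMatrix :
    (tailMatrix H)ᵀ * nbMatrix H =
      adjMatrix H * (tailMatrix H)ᵀ - (tailMatrix H)ᵀ * revMatrix H := by
  rw [nbMatrix_eq_revMatrix_mul, Matrix.mul_sub, Matrix.mul_one, Matrix.mul_sub,
    ← tailMatrix_transpose_mul_revMatrix_mul_tailMatrix]
  simp only [Matrix.mul_assoc]

end Incidence

section Uniform

variable {q : ℕ} {H : Finset (Finset (Fin n))}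

theorem revMatrix_mul_self (huniform : ∀ e ∈ H, e.card = q) :
    revMatrix H * revMatrix H = ((q : ℂ) - 2) • revMatrix H + ((q : ℂ) - 1) • 1 := by
  have hdiag : (edgeMatrix H)ᵀ * edgeMatrix H = (q : ℂ) • 1 := by
    rw [edgeMatrix_transpose_mul_self, Matrix.smul_one_eq_diagonal]
    simp [huniform]
  have hsq : (revMatrix H + 1) * (revMatrix H + 1) = (q : ℂ) • (revMatrix H + 1) := by
    rw [← edgeMatrix_mul_transpose, Matrix.mul_assoc, ← Matrix.mul_assoc (edgeMatrix H)ᵀ, hdiag,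
      Matrix.smul_mul, Matrix.one_mul, Matrix.mul_smul]
  rw [add_mul, mul_add, one_mul, mul_one] at hsq
  linear_combination (norm := module) hsq

theorem eq_neg_one_or_eq_of_revMatrix_mulVec (huniform : ∀ e ∈ H, e.card = q) {μ : ℂ}
    {v : OEdge H → ℂ} (hv : v ≠ 0) (heig : revMatrix H *ᵥ v = μ • v) :
    μ = -1 ∨ μ = (q : ℂ) - 1 := by
  have hsq := congrArg (· *ᵥ v) (revMatrix_mul_self huniform)
  simp only [← Matrix.mulVec_mulVec, Matrix.add_mulVec, Matrix.smul_mulVec, Matrix.one_mulVec,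
    heig, Matrix.mulVec_smul] at hsq
  have hroot : ((μ + 1) * (μ - ((q : ℂ) - 1))) • v = 0 := by
    linear_combination (norm := module) hsq
  simpa [hv, add_eq_zero_iff_eq_neg, sub_eq_zero] using hroot

theorem isUnit_det_revMatrix (hq : q ≠ 1) (huniform : ∀ e ∈ H, e.card = q) :
    IsUnit (revMatrix H).det := by
  have hq_sub : (q : ℂ) - 1 ≠ 0 := sub_ne_zero.2 (mod_cast hq)
  refine Matrix.isUnit_det_of_right_inverse
    (B := ((q : ℂ) - 1)⁻¹ • (revMatrix H - ((q : ℂ) - 2) • 1)) ?_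
  rw [Matrix.mul_smul, Matrix.mul_sub, revMatrix_mul_self huniform, Matrix.mul_smul, Matrix.mul_one,
    add_sub_cancel_left, inv_smul_smul₀ hq_sub]

theorem revMatrix_eq_add_smul_inv (hq : q ≠ 1) (huniform : ∀ e ∈ H, e.card = q) :
    revMatrix H = ((q : ℂ) - 2) • 1 + ((q : ℂ) - 1) • (revMatrix H)⁻¹ := by
  have hunit := isUnit_det_revMatrix hq huniform
  calc revMatrix H = revMatrix H * revMatrix H * (revMatrix H)⁻¹ := by
        rw [Matrix.mul_nonsing_inv_cancel_right _ _ hunit]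
    _ = ((q : ℂ) - 2) • 1 + ((q : ℂ) - 1) • (revMatrix H)⁻¹ := by
        rw [revMatrix_mul_self huniform, Matrix.add_mul, Matrix.smul_mul, Matrix.smul_mul,
          Matrix.one_mul, Matrix.mul_nonsing_inv _ hunit]

theorem inv_revMatrix_mul_nbMatrix (hq : q ≠ 1) (huniform : ∀ e ∈ H, e.card = q) :
    (revMatrix H)⁻¹ * nbMatrix H = tailMatrix H * (tailMatrix H)ᵀ - 1 := by
  rw [nbMatrix_eq_revMatrix_mul,
    Matrix.nonsing_inv_mul_cancel_left _ _ (isUnit_det_revMatrix hq huniform)]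

end Uniform

section Reduction

theorem vOut_eq_mulVec (H : Finset (Finset (Fin n))) (v : OEdge H → ℂ) :
    vOut H v = (tailMatrix H)ᵀ *ᵥ v := by
  ext i
  simp [vOut, Matrix.mulVec, dotProduct, tailMatrix]

/-- The matrix `R` of the linear map `v ↦ (v_in, v_out)`, which intertwines `B` and `B̃`. -/
noncomputable def reductionMatrix (H : Finset (Finset (Fin n))) :
    Matrix (Fin n ⊕ Fin n) (OEdge H) ℂ :=
  Matrix.fromRows ((tailMatrix H)ᵀ * (revMatrix H)⁻¹) (tailMatrix H)ᵀ

theorem reductionMatrix_mulVec (H : Finset (Finset (Fin n))) (v : OEdge H → ℂ) :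
    reductionMatrix H *ᵥ v = Sum.elim (vIn H v) (vOut H v) := by
  have hin : vIn H v = vOut H ((revMatrix H)⁻¹ *ᵥ v) := rfl
  rw [reductionMatrix, Matrix.fromRows_mulVec, ← Matrix.mulVec_mulVec, hin, vOut_eq_mulVec,
    vOut_eq_mulVec]

variable {q : ℕ} {H : Finset (Finset (Fin n))}

theorem redMatrix_mul_reductionMatrix (hq : q ≠ 1) (huniform : ∀ e ∈ H, e.card = q) :
    redMatrix q H * reductionMatrix H = reductionMatrix H * nbMatrix H := by
  have hrev : (tailMatrix H)ᵀ * revMatrix H =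
      ((q : ℂ) - 2) • (tailMatrix H)ᵀ + ((q : ℂ) - 1) • ((tailMatrix H)ᵀ * (revMatrix H)⁻¹) := by
    nth_rw 1 [revMatrix_eq_add_smul_inv hq huniform]
    rw [Matrix.mul_add, Matrix.mul_smul, Matrix.mul_smul, Matrix.mul_one]
  rw [redMatrix, reductionMatrix, Matrix.fromBlocks_mul_fromRows, Matrix.fromRows_mul]
  congr 1
  · rw [Matrix.mul_assoc, inv_revMatrix_mul_nbMatrix hq huniform, Matrix.mul_sub,
      ← Matrix.mul_assoc _ (tailMatrix H), tailMatrix_transpose_mul_self, Matrix.mul_one,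
      Matrix.zero_mul, zero_add, Matrix.sub_mul, Matrix.one_mul]
  · rw [tailMatrix_transpose_mul_nbMatrix, hrev, Matrix.neg_mul, Matrix.smul_mul, Matrix.one_mul,
      Matrix.sub_mul, Matrix.smul_mul, Matrix.one_mul]
    abel

theorem vOut_ne_zero_of_nbMatrix_mulVec (huniform : ∀ e ∈ H, e.card = q) {lam : ℂ} (hlam1 : lam ≠ 1)
    (hlam2 : lam ≠ -((q : ℂ) - 1)) {v : OEdge H → ℂ} (hv : v ≠ 0)
    (heig : nbMatrix H *ᵥ v = lam • v) : vOut H v ≠ 0 := by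
  intro hout
  have hrev : revMatrix H *ᵥ v = (-lam) • v := by
    rw [neg_smul, ← heig, nbMatrix_eq_revMatrix_mul, ← Matrix.mulVec_mulVec, Matrix.sub_mulVec,
      ← Matrix.mulVec_mulVec, ← vOut_eq_mulVec, hout, Matrix.mulVec_zero, Matrix.one_mulVec,
      zero_sub, Matrix.mulVec_neg, neg_neg]
  rcases eq_neg_one_or_eq_of_revMatrix_mulVec huniform hv hrev with hneg | hneg
  · exact hlam1 (neg_inj.1 hneg)
  · exact hlam2 (neg_eq_iff_eq_neg.1 hneg)

end Reduction

/-- If `v` is an eigenvector of `B` with eigenvalue `λ ∉ {1, −(q−1)}`, then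
`v′ = (v_in, v_out)` is nonzero and is an eigenvector of `B̃` with the same eigenvalue. -/
theorem eigenvector_reduction (q : ℕ) (hq : 2 ≤ q) (H : Finset (Finset (Fin n)))
    (huniform : ∀ e ∈ H, e.card = q)
    (lam : ℂ) (hlam1 : lam ≠ 1) (hlam2 : lam ≠ -((q : ℂ) - 1))
    (v : OEdge H → ℂ) (hv : v ≠ 0) (heig : (nbMatrix H).mulVec v = lam • v) :
    Sum.elim (vIn H v) (vOut H v) ≠ 0 ∧
      (redMatrix q H).mulVec (Sum.elim (vIn H v) (vOut H v)) =
        lam • Sum.elim (vIn H v) (vOut H v) := by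
  constructor
  · intro hzero
    exact vOut_ne_zero_of_nbMatrix_mulVec huniform hlam1 hlam2 hv heig
      (funext fun i => congrFun hzero (Sum.inr i))
  · rw [← reductionMatrix_mulVec, Matrix.mulVec_mulVec,
      redMatrix_mul_reductionMatrix (by omega) huniform, ← Matrix.mulVec_mulVec, heig,
      Matrix.mulVec_smul]

end HypergraphNB
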